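/- With $\hat H_2$ as in the context, fix $\Lambda_1$ with $1 < \Lambda_1 < \Lambda_2$ and set $c = -\frac{1}{2\Lambda_1^2} - \Lambda_1$. Then for every $(x_1,x_2,y_1,y_2) \in \mathbb{R}^4$ with $y_2 > 1$ and $\frac12(x_1^2+y_1^2) + \hat H_2(y_2) = c$, one has $\frac12(x_1^2+y_1^2) + (y_2-\Lambda_3)\,\hat H_2'(y_2) > 0$. -/

import Mathlib

/-- The interpolated function `Ĥ₂(y) = (1 - f(y))(-1/(2y²) - y) + f(y)(½(y-Λ₃)² + B)`
from the appendix of the paper. -/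
noncomputable def H2hat (Λ3 B : ℝ) (f : ℝ → ℝ) (y : ℝ) : ℝ :=
  (1 - f y) * (-(1 / (2 * y ^ 2)) - y) + f y * ((y - Λ3) ^ 2 / 2 + B)

/-!
Blending two functions that decrease at a point gives a function that decreases there, provided the
extra term `f' * (h - g)` of the product rule is nonpositive. For the monotone cut-off `f` this term
vanishes where `f` is `0` or `1`, since these are its extreme values, and is nonpositive elsewhere
because `V ≤ H₂` there. So `Ĥ₂` decreases on `(1, Λ₃)`, while `Ĥ₂ = V` on `[Λ₃, ∞)`: the function
`(y - Λ₃) Ĥ₂'(y)` is positive on `(1, ∞)` except at `y = Λ₃`. At that point `Ĥ₂` has the value `B`,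
so on any level set `c ≠ B` the term `(x₁² + y₁²) / 2 = c - B` is nonzero and takes over.
-/

open Set

section Blend

/-- The interpolation between `g` and `h` with weight `f` on `h`, the construction by which `Ĥ₂` is
glued from two Hamiltonians. -/
def blend {α R : Type*} [Ring R] (f g h : α → R) (y : α) : R :=
  (1 - f y) * g y + f y * h y

theorem hasDerivAt_blend {𝕜 : Type*} [NontriviallyNormedField 𝕜] {f g h : 𝕜 → 𝕜}
    {f' g' h' y : 𝕜} (hf : HasDerivAt f f' y) (hg : HasDerivAt g g' y)
    (hh : HasDerivAt h h' y) :
    HasDerivAt (blend f g h) ((1 - f y) * g' + f y * h' + f' * (h y - g y)) y :=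
  (((hf.const_sub 1).mul hg).add (hf.mul hh)).congr_deriv (by ring)

variable {f g h : ℝ → ℝ} {g' h' y : ℝ}

theorem deriv_eq_zero_of_apply_notMem_Ioo {a b : ℝ} (hrange : ∀ z, f z ∈ Icc a b)
    (hy : f y ∉ Ioo a b) : deriv f y = 0 := by
  rcases (hrange y).1.eq_or_lt with hmin | hlt
  · have : IsLocalMin f y := .of_forall fun z ↦ hmin ▸ (hrange z).1
    exact this.deriv_eq_zero
  · have hmax : b ≤ f y := not_lt.mp fun hyb ↦ hy ⟨hlt, hyb⟩
    have : IsLocalMax f y := .of_forall fun z ↦ (hrange z).2.trans hmax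
    exact this.deriv_eq_zero

theorem deriv_blend_neg (hf : DifferentiableAt ℝ f y) (hmono : Monotone f)
    (hrange : ∀ z, f z ∈ Icc 0 1) (hg : HasDerivAt g g' y) (hh : HasDerivAt h h' y)
    (hg' : g' < 0) (hh' : h' < 0) (hle : f y ∈ Ioo 0 1 → h y ≤ g y) :
    deriv (blend f g h) y < 0 := by
  have hconvex : (1 - f y) * g' + f y * h' < 0 :=
    convex_Iio (0 : ℝ) hg' hh' (sub_nonneg.2 (hrange y).2) (hrange y).1 (sub_add_cancel _ _)
  have hswitch : deriv f y * (h y - g y) ≤ 0 := by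
    by_cases hy : f y ∈ Ioo 0 1
    · exact mul_nonpos_of_nonneg_of_nonpos hmono.deriv_nonneg (sub_nonpos.2 (hle hy))
    · rw [deriv_eq_zero_of_apply_notMem_Ioo hrange hy, zero_mul]
  rw [(hasDerivAt_blend hf.hasDerivAt hg hh).deriv]
  exact add_neg_of_neg_of_nonpos hconvex hswitch

theorem deriv_blend_of_eq_one (hf : DifferentiableAt ℝ f y) (hrange : ∀ z, f z ∈ Icc 0 1)
    (hg : HasDerivAt g g' y) (hh : HasDerivAt h h' y) (hy : f y = 1) :
    deriv (blend f g h) y = h' := by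
  have hf' : deriv f y = 0 := deriv_eq_zero_of_apply_notMem_Ioo hrange fun hmem ↦ hmem.2.ne hy
  rw [(hasDerivAt_blend hf.hasDerivAt hg hh).deriv, hf', hy]
  ring

end Blend

/-- The function `H₂(y) = -1/(2y²) - y`, a Kepler energy with a rotation term. Only `y > 0` is
meaningful: division by zero gives it the value `0` at `y = 0`. -/
noncomputable def keplerHamiltonian (y : ℝ) : ℝ :=
  -(1 / (2 * y ^ 2)) - y

/-- The quadratic Hamiltonian `V(y) = (y - Λ)²/2 + B` that replaces `H₂` near its minimum `Λ`. -/
noncomputable def quadraticWell (Λ B y : ℝ) : ℝ :=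
  (y - Λ) ^ 2 / 2 + B

theorem H2hat_eq_blend (Λ B : ℝ) (f : ℝ → ℝ) :
    H2hat Λ B f = blend f keplerHamiltonian (quadraticWell Λ B) :=
  rfl

theorem hasDerivAt_keplerHamiltonian {y : ℝ} (hy : y ≠ 0) :
    HasDerivAt keplerHamiltonian (1 / y ^ 3 - 1) y := by
  have hsq : HasDerivAt (fun z : ℝ ↦ 2 * z ^ 2) (2 * (2 * y)) y := by
    simpa using (hasDerivAt_pow 2 y).const_mul 2
  have hinv : HasDerivAt (fun z : ℝ ↦ 1 / (2 * z ^ 2)) (-(1 / y ^ 3)) y := by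
    simpa only [one_div] using
      (hsq.fun_inv (by positivity)).congr_deriv (by field_simp)
  exact (hinv.fun_neg.fun_sub (hasDerivAt_id' y)).congr_deriv (by rw [neg_neg])

theorem one_div_cube_sub_one_neg {y : ℝ} (hy : 1 < y) : 1 / y ^ 3 - 1 < 0 :=
  sub_neg.2 ((div_lt_one (by positivity)).2 (one_lt_pow₀ hy three_ne_zero))

theorem strictAntiOn_keplerHamiltonian : StrictAntiOn keplerHamiltonian (Ici 1) := by
  have hderiv {y : ℝ} (hy : 1 ≤ y) := hasDerivAt_keplerHamiltonian (y := y) (by positivity)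
  refine strictAntiOn_of_deriv_neg (convex_Ici 1)
    (fun y hy ↦ (hderiv hy).continuousAt.continuousWithinAt) fun y hy ↦ ?_
  rw [interior_Ici, mem_Ioi] at hy
  rw [(hderiv hy.le).deriv]
  exact one_div_cube_sub_one_neg hy

theorem hasDerivAt_quadraticWell (Λ B y : ℝ) :
    HasDerivAt (quadraticWell Λ B) (y - Λ) y :=
  (((((hasDerivAt_id' y).sub_const Λ).fun_pow 2).div_const 2).add_const B).congr_deriv (by ring)

theorem quadraticWell_le_keplerHamiltonian_iff {Λ B y : ℝ} :
    quadraticWell Λ B y ≤ keplerHamiltonian y ↔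
      (y - Λ) ^ 2 / 2 + B + 1 / (2 * y ^ 2) + y ≤ 0 := by
  rw [quadraticWell, keplerHamiltonian, le_sub_iff_add_le, le_neg_iff_add_nonpos_right,
    add_right_comm]

theorem le_quadraticWell (Λ B y : ℝ) : B ≤ quadraticWell Λ B y :=
  le_add_of_nonneg_left (by positivity)

theorem lt_keplerHamiltonian_of_quadraticWell_le {Λ B v w : ℝ} (hv : 1 ≤ v) (hvw : v < w)
    (hw : quadraticWell Λ B w ≤ keplerHamiltonian w) : B < keplerHamiltonian v :=
  calc
    B ≤ quadraticWell Λ B w := le_quadraticWell Λ B w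
    _ ≤ keplerHamiltonian w := hw
    _ < keplerHamiltonian v := strictAntiOn_keplerHamiltonian hv (hv.trans hvw.le) hvw

theorem mem_Icc_of_apply_mem_Ioo {α β : Type*} [LinearOrder α] [Preorder β] {f : α → β}
    {a b y : α} {u v : β} (hfa : ∀ z, z ≤ a → f z = u) (hfb : ∀ z, b ≤ z → f z = v)
    (hy : f y ∈ Ioo u v) : y ∈ Icc a b :=
  ⟨le_of_not_ge fun h ↦ hy.1.ne' (hfa y h), le_of_not_ge fun h ↦ hy.2.ne (hfb y h)⟩

section H2hat

variable {Λ B : ℝ} {f : ℝ → ℝ}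

theorem H2hat_apply_of_eq_one (hfΛ : f Λ = 1) : H2hat Λ B f Λ = B := by
  simp [H2hat, hfΛ]

theorem sub_mul_deriv_H2hat_pos (hf : Differentiable ℝ f) (hmono : Monotone f)
    (hrange : ∀ z, f z ∈ Icc 0 1) (hfΛ : f Λ = 1)
    (hle : ∀ z, 1 < z → f z ∈ Ioo 0 1 → quadraticWell Λ B z ≤ keplerHamiltonian z)
    {y : ℝ} (hy : 1 < y) (hyΛ : y ≠ Λ) :
    0 < (y - Λ) * deriv (H2hat Λ B f) y := by
  have hkepler := hasDerivAt_keplerHamiltonian (y := y) (by positivity)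
  have hwell := hasDerivAt_quadraticWell Λ B y
  rw [H2hat_eq_blend]
  rcases hyΛ.lt_or_gt with hlt | hgt
  · exact mul_pos_of_neg_of_neg (sub_neg.2 hlt) (deriv_blend_neg (hf y) hmono hrange
      hkepler hwell (one_div_cube_sub_one_neg hy) (sub_neg.2 hlt) (hle y hy))
  · have hfy : f y = 1 := (hrange y).2.antisymm (hfΛ ▸ hmono hgt.le)
    rw [deriv_blend_of_eq_one (hf y) hrange hkepler hwell hfy]
    exact mul_self_pos.2 (sub_ne_zero.2 hyΛ)

theorem stmt_16_general {c x1 y1 y2 : ℝ} (hf : Differentiable ℝ f) (hmono : Monotone f)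
    (hrange : ∀ z, f z ∈ Icc 0 1) (hfΛ : f Λ = 1)
    (hle : ∀ z, 1 < z → f z ∈ Ioo 0 1 → quadraticWell Λ B z ≤ keplerHamiltonian z)
    (hcB : c ≠ B) (hy2 : 1 < y2) (hlevel : (x1 ^ 2 + y1 ^ 2) / 2 + H2hat Λ B f y2 = c) :
    0 < (x1 ^ 2 + y1 ^ 2) / 2 + (y2 - Λ) * deriv (H2hat Λ B f) y2 := by
  have hnonneg : 0 ≤ (x1 ^ 2 + y1 ^ 2) / 2 := by positivity
  rcases eq_or_ne y2 Λ with rfl | hne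
  · rw [H2hat_apply_of_eq_one hfΛ] at hlevel
    have hne_zero : (x1 ^ 2 + y1 ^ 2) / 2 ≠ 0 := fun h ↦ hcB (by rw [← hlevel, h, zero_add])
    simpa only [sub_self, zero_mul, add_zero] using hnonneg.lt_of_ne' hne_zero
  · exact add_pos_of_nonneg_of_pos hnonneg
      (sub_mul_deriv_H2hat_pos hf hmono hrange hfΛ hle hy2 hne)

end H2hat

/-- The transversality claim of the appendix of the paper: along the level set
`½(x₁² + y₁²) + Ĥ₂(y₂) = c` with `c = -1/(2Λ₁²) - Λ₁`, one has
`dĤ(Ŷ) = ½(x₁² + y₁²) + (y₂ - Λ₃) Ĥ₂'(y₂) > 0`. -/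
theorem stmt_16 (Λ1 Λ2 Λ3 ε B c : ℝ) (f : ℝ → ℝ)
    (hΛ2 : 1 < Λ2) (hΛ23 : Λ2 < Λ3)
    (hε : 0 < ε) (hε' : ε < (Λ3 - Λ2) / 2)
    (hB : ∀ y ∈ Set.Icc (Λ2 + ε) (Λ2 + 2 * ε),
      (y - Λ3) ^ 2 / 2 + B + 1 / (2 * y ^ 2) + y ≤ 0)
    (hf : ContDiff ℝ (⊤ : ℕ∞) f) (hfmono : Monotone f)
    (hfrange : ∀ y, f y ∈ Set.Icc (0 : ℝ) 1)
    (hf0 : ∀ y, y ≤ Λ2 + ε → f y = 0)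
    (hf1 : ∀ y, Λ2 + 2 * ε ≤ y → f y = 1)
    (hΛ1 : 1 < Λ1) (hΛ12 : Λ1 < Λ2)
    (hc : c = -(1 / (2 * Λ1 ^ 2)) - Λ1) :
    ∀ x1 x2 y1 y2 : ℝ, 1 < y2 →
      (x1 ^ 2 + y1 ^ 2) / 2 + H2hat Λ3 B f y2 = c →
      0 < (x1 ^ 2 + y1 ^ 2) / 2 + (y2 - Λ3) * deriv (H2hat Λ3 B f) y2 := by
  intro x1 _ y1 y2 hy2 hlevel
  have hle (y) (hy : y ∈ Icc (Λ2 + ε) (Λ2 + 2 * ε)) :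
      quadraticWell Λ3 B y ≤ keplerHamiltonian y :=
    quadraticWell_le_keplerHamiltonian_iff.2 (hB y hy)
  have hBc : B < c := hc ▸ lt_keplerHamiltonian_of_quadraticWell_le hΛ1.le (by linarith)
    (hle (Λ2 + ε) ⟨le_rfl, by linarith⟩)
  exact stmt_16_general (hf.differentiable (by simp)) hfmono hfrange (hf1 Λ3 (by linarith))
    (fun y _ hy ↦ hle y (mem_Icc_of_apply_mem_Ioo hf0 hf1 hy)) hBc.ne' hy2 hlevel
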